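/- Let X be a spectrally negative Lévy process with non-monotone paths such that the law of X_t is atomless for every t>0, and suppose E[e^{θ₀X_1}]<∞ for some θ₀>0. Assume γ>0 and 0<ψ'(γ)<∞. Fix v with 0<v<ψ'(γ) and suppose there exists Γ(v)∈Θ° with ψ'(Γ(v))=v. Then for all sequences t_n→∞ and x_n with (x_n−v t_n)/t_n^{1/2}→0, one has lim_{n→∞} e^{γ x_n} P(τ(x_n) ≤ t_n) = 1. (This is the case 0<v<ψ'(γ) of the paper's main Theorem, whose Cramér constant C_γ equals 1 for spectrally negative processes by Remark 1(a).) -/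

import Mathlib

open MeasureTheory ProbabilityTheory Filter Set

/-- A (real-valued) Lévy process: `X 0 = 0` a.s., a.s. càdlàg paths on `[0,∞)`,
and stationary independent increments. -/
structure LevyProcess {Ω : Type*} [MeasurableSpace Ω] (P : Measure Ω)
    (X : ℝ → Ω → ℝ) : Prop where
  meas : ∀ t : ℝ, Measurable (X t)
  init : ∀ᵐ ω ∂P, X 0 ω = 0
  rightCont : ∀ᵐ ω ∂P, ∀ t : ℝ, 0 ≤ t →
    ContinuousWithinAt (fun s => X s ω) (Set.Ici t) t
  leftLimits : ∀ᵐ ω ∂P, ∀ t : ℝ, 0 < t →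
    ∃ l : ℝ, Filter.Tendsto (fun s => X s ω) (nhdsWithin t (Set.Ico 0 t)) (nhds l)
  stat : ∀ s t : ℝ, 0 ≤ s → s ≤ t →
    Measure.map (fun ω => X t ω - X s ω) P = Measure.map (X (t - s)) P
  indep : ∀ s t : ℝ, 0 ≤ s → s ≤ t →
    Indep (⨆ u ∈ Set.Icc (0:ℝ) s, MeasurableSpace.comap (X u) inferInstance)
      (MeasurableSpace.comap (fun ω => X t ω - X s ω) inferInstance) P

/-- The Laplace exponent `ψ(θ) = log E[exp (θ W)]`. -/
noncomputable def laplaceExponent {Ω : Type*} [MeasurableSpace Ω] (P : Measure Ω)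
    (W : Ω → ℝ) (θ : ℝ) : ℝ :=
  Real.log (∫ ω, Real.exp (θ * W ω) ∂P)

/-- The domain `Θ = {θ : E[exp (θ W)] < ∞}` of the Laplace exponent. -/
def laplaceDomain {Ω : Type*} [MeasurableSpace Ω] (P : Measure Ω)
    (W : Ω → ℝ) : Set ℝ :=
  {θ : ℝ | Integrable (fun ω => Real.exp (θ * W ω)) P}

/-! Let `Q` be the Esscher transform of `P` by `exp (γ X_t)`. On the events known at time `s ≤ t` it
agrees with the transform by `exp (γ X_s)`, and since `ψ(γ) = 0` there is no normalising constant.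
A path without positive jumps crosses the level `x` exactly at `x`, so
`e^{γ x} P(τ(x) ≤ t) = Q(τ(x) ≤ t)`: the overshoots along a grid of mesh `1 / (N + 1)` are at most
`δ` with `Q`-probability tending to one, for every `δ > 0`.

By Chernoff's bound, `Q(X_t ≤ x) ≤ exp ((γ - θ) x + t ψ(θ))` for `0 ≤ θ ≤ γ`. If `v < ψ'(γ)`, some
`θ < γ` satisfies `ψ(θ) < -v (γ - θ)`, and the bound decays exponentially in `t` when `x ≤ v t`. -/

open scoped Topology ENNReal

section Analysis

theorem eventually_exists_natCast_div_mem_Ico {a b : ℝ} (ha : 0 ≤ a) (hab : a < b) :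
    ∀ᶠ N : ℕ in atTop, ∃ k : ℕ, (k / (N + 1) : ℝ) ∈ Ico a b := by
  have hmesh : ∀ᶠ N : ℕ in atTop, 1 / ((N : ℝ) + 1) < b - a :=
    tendsto_one_div_add_atTop_nhds_zero_nat.eventually_lt_const (sub_pos.2 hab)
  filter_upwards [hmesh] with N hN
  have hN1 : (0 : ℝ) < N + 1 := by positivity
  refine ⟨⌈a * (N + 1)⌉₊, (le_div_iff₀ hN1).2 (Nat.le_ceil _), ?_⟩
  calc (⌈a * (N + 1)⌉₊ : ℝ) / (N + 1)
      < (a * (N + 1) + 1) / (N + 1) := by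
        gcongr
        exact Nat.ceil_lt_add_one (by positivity)
    _ = a + 1 / (N + 1) := by field_simp
    _ < b := by linarith

theorem exists_mem_Ioo_lt_of_hasDerivWithinAt {f : ℝ → ℝ} {s : Set ℝ} {a b d v : ℝ}
    (hab : a < b) (hs : Ioo a b ⊆ s) (hf : HasDerivWithinAt f d s b) (hv : v < d) :
    ∃ θ ∈ Ioo a b, f θ < f b - v * (b - θ) := by
  have hslope : Tendsto (slope f b) (𝓝[<] b) (𝓝 d) := by
    rw [← nhdsWithin_Ioo_eq_nhdsLT hab]
    exact hasDerivWithinAt_iff_tendsto_slope.1 hf |>.mono_left <|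
      nhdsWithin_mono _ fun θ hθ => ⟨hs hθ, hθ.2.ne⟩
  have hmem : ∀ᶠ θ in 𝓝[<] b, θ ∈ Ioo a b := Ioo_mem_nhdsLT hab
  obtain ⟨θ, hθ, hlt⟩ := (hmem.and (hslope.eventually_const_lt hv)).exists
  rw [slope_def_field, lt_div_iff_of_neg (sub_neg.2 hθ.2)] at hlt
  exact ⟨θ, hθ, by linarith⟩

theorem eventually_mem_Icc_mul_of_tendsto_sub_div_sqrt {ι : Type*} {l : Filter ι}
    {t x : ι → ℝ} {v w : ℝ} (hv : 0 < v) (hvw : v < w) (ht : Tendsto t l atTop)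
    (hx : Tendsto (fun i => (x i - v * t i) / √(t i)) l (𝓝 0)) :
    ∀ᶠ i in l, x i ∈ Icc 0 (w * t i) := by
  have hratio : Tendsto (fun i => (x i - v * t i) / √(t i) * (√(t i))⁻¹) l (𝓝 0) := by
    simpa using hx.mul (Real.tendsto_sqrt_atTop.comp ht).inv_tendsto_atTop
  filter_upwards [hratio.eventually_const_lt (neg_neg_of_pos hv),
    hratio.eventually_lt_const (sub_pos.2 hvw), ht.eventually_gt_atTop 0] with i hlow hup hpos
  rw [← div_eq_mul_inv, div_div, Real.mul_self_sqrt hpos.le] at hlow hup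
  rw [lt_div_iff₀ hpos] at hlow
  rw [div_lt_iff₀ hpos] at hup
  exact ⟨by linarith, by linarith⟩

theorem exists_mem_nhds_forall_sub_le_of_le_leftLim {f : ℝ → ℝ} {a δ : ℝ}
    (hright : ContinuousWithinAt f (Ici a) a)
    (hleft : 0 < a → ∃ l, Tendsto f (𝓝[Ico 0 a] a) (𝓝 l))
    (hjump : 0 < a → f a ≤ Function.leftLim f a) (hδ : 0 < δ) :
    ∃ U ∈ 𝓝 a, ∀ s ∈ U, ∀ u ∈ U, 0 ≤ s → s ≤ u → f u - f s ≤ δ := by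
  have hnear_right : ∀ᶠ s in 𝓝 a, a ≤ s → |f s - f a| < δ / 2 :=
    eventually_nhdsWithin_iff.1 <| Metric.tendsto_nhds.1 hright _ (half_pos hδ)
  obtain ⟨l, hnear_left⟩ : ∃ l, ∀ᶠ s in 𝓝 a, s ∈ Ico 0 a → |f s - l| < δ / 2 ∧ f a ≤ l := by
    rcases le_or_gt a 0 with ha | ha
    · exact ⟨0, .of_forall fun s hs => absurd (hs.1.trans_lt hs.2) ha.not_gt⟩
    obtain ⟨l, hl⟩ := hleft ha
    have hfal : f a ≤ l :=
      (hjump ha).trans_eq (leftLim_eq_of_tendsto (nhdsWithin_Ico_eq_nhdsLT ha ▸ hl))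
    have hnear := eventually_nhdsWithin_iff.1 <| Metric.tendsto_nhds.1 hl _ (half_pos hδ)
    exact ⟨l, hnear.mono fun s hs hmem => ⟨hs hmem, hfal⟩⟩
  refine ⟨_, hnear_right.and hnear_left, ?_⟩
  rintro s ⟨hs_right, hs_left⟩ u ⟨hu_right, hu_left⟩ hs0 hsu
  simp only [abs_lt] at *
  rcases le_or_gt a s with has | hsa
  · linarith [(hs_right has).1, (hu_right (has.trans hsu)).2]
  obtain ⟨⟨hs_l, -⟩, hal⟩ := hs_left ⟨hs0, hsa⟩
  rcases le_or_gt a u with hau | hua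
  · linarith [(hu_right hau).2]
  · linarith [(hu_left ⟨hs0.trans hsu, hua⟩).1.2]

theorem exists_forall_sub_le_of_le_leftLim {f : ℝ → ℝ}
    (hright : ∀ t, 0 ≤ t → ContinuousWithinAt f (Ici t) t)
    (hleft : ∀ t, 0 < t → ∃ l, Tendsto f (𝓝[Ico 0 t] t) (𝓝 l))
    (hjump : ∀ t, 0 < t → f t ≤ Function.leftLim f t) (T : ℝ) {δ : ℝ} (hδ : 0 < δ) :
    ∃ η > 0, ∀ s u, 0 ≤ s → s ≤ u → u ≤ T → u - s < η → f u - f s ≤ δ := by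
  have hlocal : ∀ a ∈ Icc 0 T,
      ∃ U ∈ 𝓝 a, ∀ s ∈ U, ∀ u ∈ U, 0 ≤ s → s ≤ u → f u - f s ≤ δ := fun a ha =>
    exists_mem_nhds_forall_sub_le_of_le_leftLim (hright a ha.1) (hleft a) (hjump a) hδ
  choose U hU hUδ using hlocal
  obtain ⟨η, hη, hball⟩ :=
    Metric.uniformity_basis_dist.lebesgue_number_lemma_nhds' isCompact_Icc hU
  refine ⟨η, hη, fun s u hs hsu huT hlt => ?_⟩
  obtain ⟨a, hsub⟩ := hball s ⟨hs, hsu.trans huT⟩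
  have hmem_s : s ∈ UniformSpace.ball s {p : ℝ × ℝ | dist p.1 p.2 < η} := by
    simpa [UniformSpace.ball] using hη
  have hmem_u : u ∈ UniformSpace.ball s {p : ℝ × ℝ | dist p.1 p.2 < η} := by
    simpa [UniformSpace.ball, Real.dist_eq, abs_sub_comm s u,
      abs_of_nonneg (sub_nonneg.2 hsu)] using hlt
  exact hUδ a a.2 s (hsub hmem_s) u (hsub hmem_u) hs hsu

end Analysis

section MeasureTheory

variable {Ω : Type*} {mΩ : MeasurableSpace Ω} {μ ν : Measure Ω}

theorem integrable_and_integral_le_of_ae_tendsto {F : ℕ → Ω → ℝ} {G : Ω → ℝ} {c : ℝ}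
    (hF : ∀ n, Integrable (F n) μ) (hF0 : ∀ n ω, 0 ≤ F n ω)
    (hlim : ∀ᵐ ω ∂μ, Tendsto (F · ω) atTop (𝓝 (G ω)))
    (hc : Tendsto (fun n => ∫ ω, F n ω ∂μ) atTop (𝓝 c)) :
    Integrable G μ ∧ ∫ ω, G ω ∂μ ≤ c := by
  have hG0 : 0 ≤ᵐ[μ] G := hlim.mono fun ω hω => ge_of_tendsto' hω fun n => hF0 n ω
  have hGm : AEStronglyMeasurable G μ :=
    aestronglyMeasurable_of_tendsto_ae atTop (fun n => (hF n).1) hlim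
  have hfatou : ∫⁻ ω, ENNReal.ofReal (G ω) ∂μ ≤ ENNReal.ofReal c := calc
    ∫⁻ ω, ENNReal.ofReal (G ω) ∂μ
      = ∫⁻ ω, liminf (fun n => ENNReal.ofReal (F n ω)) atTop ∂μ :=
        lintegral_congr_ae <| hlim.mono fun ω hω =>
          (ENNReal.tendsto_ofReal hω).liminf_eq.symm
    _ ≤ liminf (fun n => ∫⁻ ω, ENNReal.ofReal (F n ω) ∂μ) atTop :=
        lintegral_liminf_le' fun n => (hF n).1.aemeasurable.ennreal_ofReal
    _ = ENNReal.ofReal c := by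
        simp_rw [← fun n => ofReal_integral_eq_lintegral_ofReal (hF n) (.of_forall (hF0 n))]
        exact (ENNReal.tendsto_ofReal hc).liminf_eq
  refine ⟨⟨hGm, (hasFiniteIntegral_iff_ofReal hG0).2 (hfatou.trans_lt ENNReal.ofReal_lt_top)⟩, ?_⟩
  rw [integral_eq_lintegral_of_nonneg_ae hG0 hGm]
  exact ENNReal.toReal_le_of_le_ofReal
    (ge_of_tendsto' hc fun n => integral_nonneg (hF0 n)) hfatou

theorem tendsto_measure_of_ae_eventually_mem_iff [IsFiniteMeasure μ] {ι : Type*} {l : Filter ι}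
    [l.IsCountablyGenerated] [l.NeBot] {As : ι → Set Ω} {A : Set Ω}
    (hAs : ∀ i, MeasurableSet (As i)) (h : ∀ᵐ ω ∂μ, ∀ᶠ i in l, ω ∈ As i ↔ ω ∈ A) :
    Tendsto (fun i => μ (As i)) l (𝓝 (μ A)) := by
  have hA : NullMeasurableSet A μ :=
    nullMeasurableSet_of_tendsto_indicator l (fun i => (hAs i).nullMeasurableSet) h
  rw [← measure_toMeasurable]
  refine tendsto_measure_of_ae_tendsto_indicator_of_isFiniteMeasure l
    (measurableSet_toMeasurable μ A) hAs ?_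
  filter_upwards [h, hA.toMeasurable_ae_eq.mem_iff] with ω hω hmem
  simpa only [hmem] using hω

theorem measure_iUnion_le_of_disjointed_le {f : ℕ → Set Ω} (hf : ∀ n, MeasurableSet (f n))
    (h : ∀ n, μ (disjointed f n) ≤ ν (disjointed f n)) : μ (⋃ n, f n) ≤ ν (⋃ n, f n) := by
  rw [← iUnion_disjointed, measure_iUnion (disjoint_disjointed f) (.disjointed hf),
    measure_iUnion (disjoint_disjointed f) (.disjointed hf)]
  exact ENNReal.tsum_le_tsum h

theorem ofReal_exp_mul_measure_le_tilted_apply {Z : Ω → ℝ} {A : Set Ω} {a : ℝ}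
    (hA : MeasurableSet A) (ha : ∀ ω ∈ A, a ≤ Z ω) :
    ENNReal.ofReal (Real.exp a / ∫ ω, Real.exp (Z ω) ∂μ) * μ A ≤ μ.tilted Z A := by
  rw [tilted_apply' _ _ hA, ← setLIntegral_const]
  refine setLIntegral_mono' hA fun ω hω => ?_
  gcongr
  exact ha ω hω

theorem tilted_apply_le_ofReal_exp_mul_measure {Z : Ω → ℝ} {A : Set Ω} {a : ℝ}
    (hA : MeasurableSet A) (ha : ∀ ω ∈ A, Z ω ≤ a) :
    μ.tilted Z A ≤ ENNReal.ofReal (Real.exp a / ∫ ω, Real.exp (Z ω) ∂μ) * μ A := by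
  rw [tilted_apply' _ _ hA, ← setLIntegral_const]
  refine setLIntegral_mono' hA fun ω hω => ?_
  gcongr
  exact ha ω hω

end MeasureTheory

section LaplaceExponent

variable {Ω : Type*} [MeasurableSpace Ω] {P : Measure Ω} {W : Ω → ℝ}

theorem exp_laplaceExponent [NeZero P] {θ : ℝ} (hθ : θ ∈ laplaceDomain P W) :
    Real.exp (laplaceExponent P W θ) = mgf W P θ :=
  exp_cgf hθ

theorem Icc_zero_subset_laplaceDomain [IsFiniteMeasure P] {γ : ℝ} (hγ : γ ∈ laplaceDomain P W) :
    Icc 0 γ ⊆ laplaceDomain P W := fun _ hθ =>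
  convex_integrableExpSet.ordConnected.out (by simp [integrableExpSet]) hγ hθ

theorem laplaceExponent_eq_zero_of_mem_closure [NeZero P] {u : ℝ}
    (hu : u ∈ closure {θ ∈ laplaceDomain P W | laplaceExponent P W θ = 0})
    (hcont : ContinuousWithinAt (laplaceExponent P W) (laplaceDomain P W) u) :
    u ∈ laplaceDomain P W ∧ laplaceExponent P W u = 0 := by
  obtain ⟨a, ha, hau⟩ := mem_closure_iff_seq_limit.1 hu
  have hmgf : ∀ n, ∫ ω, Real.exp (a n * W ω) ∂P = 1 := fun n => by
    simpa [(ha n).2, mgf] using (exp_laplaceExponent (ha n).1).symm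
  have hmem : u ∈ laplaceDomain P W :=
    (integrable_and_integral_le_of_ae_tendsto (fun n => (ha n).1)
      (fun n ω => (Real.exp_pos _).le)
      (.of_forall fun ω => (Real.continuous_exp.tendsto _).comp (hau.mul_const (W ω)))
      (tendsto_const_nhds.congr fun n => (hmgf n).symm)).1
  refine ⟨hmem, tendsto_nhds_unique (hcont.tendsto.comp
    (tendsto_nhdsWithin_iff.2 ⟨hau, .of_forall fun n => (ha n).1⟩)) ?_⟩
  exact tendsto_const_nhds.congr fun n => (ha n).2.symm

theorem laplaceExponent_sSup_eq_zero [NeZero P] {γ : ℝ}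
    (hγ : γ = sSup {θ ∈ laplaceDomain P W | laplaceExponent P W θ = 0}) (hγpos : 0 < γ)
    (hcont : ContinuousWithinAt (laplaceExponent P W) (laplaceDomain P W) γ) :
    γ ∈ laplaceDomain P W ∧ laplaceExponent P W γ = 0 := by
  refine laplaceExponent_eq_zero_of_mem_closure ?_ hcont
  rw [hγ] at hγpos ⊢
  refine csSup_mem_closure ?_ ?_
  · exact nonempty_iff_ne_empty.2 fun hempty => by simp [hempty] at hγpos
  · exact not_not.1 fun hbdd => by simp [Real.sSup_of_not_bddAbove hbdd] at hγpos

theorem measureReal_tilted_le_exp [NeZero P] {θ γ x : ℝ} (hθγ : θ ≤ γ)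
    (hθ : θ ∈ laplaceDomain P W) (hγ : γ ∈ laplaceDomain P W) :
    (P.tilted (γ * W ·)).real {ω | W ω ≤ x} ≤
      Real.exp ((γ - θ) * x + (laplaceExponent P W θ - laplaceExponent P W γ)) := by
  have hsum : ∀ ω, γ * W ω + (θ - γ) * W ω = θ * W ω := fun ω => by ring
  have : IsProbabilityMeasure (P.tilted (γ * W ·)) := isProbabilityMeasure_tilted hγ
  have hint : Integrable (fun ω => Real.exp ((θ - γ) * W ω)) (P.tilted (γ * W ·)) := by
    rw [integrable_tilted_iff hγ]
    simp_rw [smul_eq_mul, ← Real.exp_add, hsum]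
    exact hθ
  have hmgf : mgf W (P.tilted (γ * W ·)) (θ - γ)
      = Real.exp (laplaceExponent P W θ - laplaceExponent P W γ) := by
    rw [mgf, integral_exp_tilted, Real.exp_sub, exp_laplaceExponent hθ, exp_laplaceExponent hγ]
    simp [mgf, hsum]
  refine (measure_le_le_exp_mul_mgf x (sub_nonpos.2 hθγ) hint).trans_eq ?_
  rw [hmgf, ← Real.exp_add]
  ring_nf

end LaplaceExponent

namespace LevyProcess

/-- The σ-algebra `σ(X u : 0 ≤ u ≤ s)` of the path up to time `s`. -/
@[reducible] def past {Ω : Type*} (X : ℝ → Ω → ℝ) (s : ℝ) : MeasurableSpace Ω :=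
  ⨆ u ∈ Icc (0 : ℝ) s, MeasurableSpace.comap (X u) inferInstance

theorem measurable_past {Ω : Type*} {X : ℝ → Ω → ℝ} {s u : ℝ} (hu : u ∈ Icc 0 s) :
    Measurable[past X s] (X u) :=
  measurable_iff_comap_le.2 <|
    le_iSup₂_of_le (f := fun u (_ : u ∈ Icc 0 s) => MeasurableSpace.comap (X u) inferInstance)
      u hu le_rfl

variable {Ω : Type*} [MeasurableSpace Ω] {P : Measure Ω} {X : ℝ → Ω → ℝ}

theorem past_le (hX : LevyProcess P X) (s : ℝ) : past X s ≤ ‹MeasurableSpace Ω› :=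
  iSup₂_le fun u _ => (hX.meas u).comap_le

/-- The event `{τ(x) ≤ t}` that the path exceeds the level `x` by time `t`. -/
def passageEvent {Ω : Type*} (X : ℝ → Ω → ℝ) (x t : ℝ) : Set Ω :=
  {ω | ∃ s, 0 ≤ s ∧ s ≤ t ∧ x < X s ω}

section Grid

/-- The grid of mesh `1 / (N + 1)` on `[0, t]`, continued by the constant `t` beyond the right
endpoint. -/
noncomputable def grid (t : ℝ) (N k : ℕ) : ℝ := min (k / (N + 1)) t

variable {t : ℝ}

theorem grid_zero (ht : 0 ≤ t) (N : ℕ) : grid t N 0 = 0 := by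
  simp [grid, ht]

theorem monotone_grid (t : ℝ) (N : ℕ) : Monotone (grid t N) := fun j k hjk => by
  unfold grid
  gcongr

theorem grid_mem_Icc (ht : 0 ≤ t) (N k : ℕ) : grid t N k ∈ Icc 0 t :=
  ⟨le_min (by positivity) ht, min_le_right _ _⟩

theorem grid_succ_sub_le (t : ℝ) (N k : ℕ) : grid t N (k + 1) - grid t N k ≤ 1 / (N + 1) := by
  have hstep : ((k + 1 : ℕ) : ℝ) / (N + 1) = k / (N + 1) + 1 / (N + 1) := by
    rw [Nat.cast_succ, add_div]
  have hmesh : (0 : ℝ) ≤ 1 / (N + 1) := by positivity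
  rw [sub_le_iff_le_add', grid, grid, hstep, ← min_add_add_right]
  gcongr
  linarith

theorem eventually_exists_lt_grid_iff {f : ℝ → ℝ} (ht : 0 ≤ t)
    (hright : ∀ s, 0 ≤ s → ContinuousWithinAt f (Ici s) s) (x : ℝ) :
    ∀ᶠ N in atTop, (∃ k, x < f (grid t N k)) ↔ ∃ s, 0 ≤ s ∧ s ≤ t ∧ x < f s := by
  suffices ∀ s, 0 ≤ s → s ≤ t → x < f s → ∀ᶠ N in atTop, ∃ k, x < f (grid t N k) by
    by_cases hex : ∃ s, 0 ≤ s ∧ s ≤ t ∧ x < f s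
    · obtain ⟨s, hs0, hst, hs⟩ := id hex
      exact (this s hs0 hst hs).mono fun N hN => iff_of_true hN hex
    · refine .of_forall fun N => iff_of_false ?_ hex
      rintro ⟨k, hk⟩
      exact hex ⟨_, (grid_mem_Icc ht N k).1, (grid_mem_Icc ht N k).2, hk⟩
  intro s hs0 hst hs
  rcases hst.eq_or_lt with rfl | hst
  · refine .of_forall fun N => ⟨⌈s * (N + 1)⌉₊, ?_⟩
    rwa [grid, min_eq_right ((le_div_iff₀ (by positivity)).2 (Nat.le_ceil _))]
  · obtain ⟨b, hb, hsub⟩ :=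
      (mem_nhdsGE_iff_exists_mem_Ioc_Ico_subset hst).1 ((hright s hs0).eventually_const_lt hs)
    filter_upwards [eventually_exists_natCast_div_mem_Ico hs0 hb.1] with N ⟨k, hk⟩
    refine ⟨k, ?_⟩
    rw [grid, min_eq_left (hk.2.le.trans hb.2)]
    exact hsub hk

theorem eventually_forall_grid_succ_sub_le {f : ℝ → ℝ} (ht : 0 ≤ t)
    (hright : ∀ s, 0 ≤ s → ContinuousWithinAt f (Ici s) s)
    (hleft : ∀ s, 0 < s → ∃ l, Tendsto f (𝓝[Ico 0 s] s) (𝓝 l))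
    (hjump : ∀ s, 0 < s → f s ≤ Function.leftLim f s) {δ : ℝ} (hδ : 0 < δ) :
    ∀ᶠ N in atTop, ∀ k, f (grid t N (k + 1)) - f (grid t N k) ≤ δ := by
  obtain ⟨η, hη, hosc⟩ := exists_forall_sub_le_of_le_leftLim hright hleft hjump t hδ
  have hmesh : ∀ᶠ N : ℕ in atTop, 1 / ((N : ℝ) + 1) < η :=
    tendsto_one_div_add_atTop_nhds_zero_nat.eventually_lt_const hη
  filter_upwards [hmesh] with N hN k
  exact hosc _ _ (grid_mem_Icc ht N k).1 (monotone_grid t N k.le_succ)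
    (grid_mem_Icc ht N (k + 1)).2 ((grid_succ_sub_le t N k).trans_lt hN)

theorem tendsto_measure_iUnion_grid (hX : LevyProcess P X) {μ : Measure Ω} [IsFiniteMeasure μ]
    (hμ : μ ≪ P) (ht : 0 ≤ t) (x : ℝ) :
    Tendsto (fun N => μ (⋃ k, {ω | x < X (grid t N k) ω})) atTop (𝓝 (μ (passageEvent X x t))) := by
  refine tendsto_measure_of_ae_eventually_mem_iff
    (fun N => .iUnion fun k => hX.meas _ measurableSet_Ioi) ?_
  filter_upwards [hμ.ae_le hX.rightCont] with ω hright
  simpa only [mem_iUnion, mem_ofPred_eq, passageEvent] using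
    eventually_exists_lt_grid_iff ht hright x

theorem tendsto_measure_iUnion_grid_increment (hX : LevyProcess P X)
    (hspec : ∀ᵐ ω ∂P, ∀ s, 0 < s → X s ω ≤ Function.leftLim (fun u => X u ω) s)
    {μ : Measure Ω} [IsFiniteMeasure μ] (hμ : μ ≪ P) (ht : 0 ≤ t) {δ : ℝ} (hδ : 0 < δ) :
    Tendsto (fun N => μ (⋃ k, {ω | δ < X (grid t N (k + 1)) ω - X (grid t N k) ω})) atTop
      (𝓝 0) := by
  rw [← measure_empty (μ := μ)]
  refine tendsto_measure_of_ae_eventually_mem_iff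
    (fun N => .iUnion fun k => measurableSet_lt measurable_const ((hX.meas _).sub (hX.meas _))) ?_
  filter_upwards [hμ.ae_le hX.rightCont, hμ.ae_le hX.leftLimits, hμ.ae_le hspec]
    with ω hright hleft hjump
  filter_upwards [eventually_forall_grid_succ_sub_le ht hright hleft hjump hδ] with N hN
  simpa using hN

end Grid

theorem mgf_increment (hX : LevyProcess P X) {s t : ℝ} (hs : 0 ≤ s) (hst : s ≤ t) :
    mgf (X t - X s) P = mgf (X (t - s)) P :=
  mgf_congr_identDistrib ⟨((hX.meas t).sub (hX.meas s)).aemeasurable,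
    (hX.meas _).aemeasurable, hX.stat s t hs hst⟩

theorem mgf_add (hX : LevyProcess P X) (θ : ℝ) {s t : ℝ} (hs : 0 ≤ s) (ht : 0 ≤ t) :
    mgf (X (s + t)) P θ = mgf (X s) P θ * mgf (X t) P θ := by
  have hindep : IndepFun (X s) (X (s + t) - X s) P :=
    indep_of_indep_of_le_left (hX.indep s (s + t) hs (by linarith))
      (measurable_past (right_mem_Icc.2 hs)).comap_le
  have hsum : X (s + t) = X s + (X (s + t) - X s) := by abel
  rw [hsum, hindep.mgf_add' (hX.meas _).aestronglyMeasurable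
    ((hX.meas _).sub (hX.meas _)).aestronglyMeasurable,
    hX.mgf_increment hs (by linarith), add_sub_cancel_left]

variable [IsProbabilityMeasure P]

theorem mgf_zero (hX : LevyProcess P X) (θ : ℝ) : mgf (X 0) P θ = 1 := by
  rw [mgf_congr (Y := fun _ => 0) hX.init, mgf_const, mul_zero, Real.exp_zero]

theorem mgf_natCast_mul (hX : LevyProcess P X) (θ : ℝ) {s : ℝ} (hs : 0 ≤ s) (k : ℕ) :
    mgf (X (k * s)) P θ = mgf (X s) P θ ^ k := by
  induction k with
  | zero => simpa using hX.mgf_zero θ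
  | succ k ih =>
    rw [Nat.cast_succ, add_one_mul, hX.mgf_add θ (by positivity) hs, ih, pow_succ]

theorem laplaceDomain_subset (hX : LevyProcess P X) {t : ℝ} (ht : 0 ≤ t) :
    laplaceDomain P (X 1) ⊆ laplaceDomain P (X t) := by
  intro θ hθ
  have hprod : mgf (X t) P θ * mgf (X (⌈t⌉₊ - t)) P θ = mgf (X 1) P θ ^ ⌈t⌉₊ := by
    rw [← hX.mgf_add θ ht (sub_nonneg.2 (Nat.le_ceil t)), add_sub_cancel,
      ← hX.mgf_natCast_mul θ zero_le_one, mul_one]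
  have hne : mgf (X t) P θ * mgf (X (⌈t⌉₊ - t)) P θ ≠ 0 :=
    hprod ▸ (pow_pos (mgf_pos hθ) _).ne'
  exact mgf_pos_iff.1 (mgf_nonneg.lt_of_ne' (left_ne_zero_of_mul hne))

section LaplaceExponent

variable {θ : ℝ}

theorem laplaceExponent_add (hX : LevyProcess P X) (hθ : θ ∈ laplaceDomain P (X 1)) {s t : ℝ}
    (hs : 0 ≤ s) (ht : 0 ≤ t) :
    laplaceExponent P (X (s + t)) θ = laplaceExponent P (X s) θ + laplaceExponent P (X t) θ := by
  apply Real.exp_injective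
  rw [Real.exp_add, exp_laplaceExponent (hX.laplaceDomain_subset hs hθ),
    exp_laplaceExponent (hX.laplaceDomain_subset ht hθ),
    exp_laplaceExponent (hX.laplaceDomain_subset (add_nonneg hs ht) hθ), hX.mgf_add θ hs ht]

theorem laplaceExponent_natCast_mul (hX : LevyProcess P X) {s : ℝ} (hs : 0 ≤ s) (k : ℕ) :
    laplaceExponent P (X (k * s)) θ = k * laplaceExponent P (X s) θ :=
  (congrArg Real.log (hX.mgf_natCast_mul θ hs k)).trans (Real.log_pow _ _)

theorem laplaceExponent_natCast_div (hX : LevyProcess P X) (k : ℕ) {n : ℕ} (hn : n ≠ 0) :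
    laplaceExponent P (X (k / n)) θ = k / n * laplaceExponent P (X 1) θ := by
  have hn' : (n : ℝ) ≠ 0 := Nat.cast_ne_zero.2 hn
  have hunit := hX.laplaceExponent_natCast_mul (θ := θ) (s := (n : ℝ)⁻¹) (by positivity) n
  rw [mul_inv_cancel₀ hn'] at hunit
  rw [hunit, div_eq_mul_inv, hX.laplaceExponent_natCast_mul (by positivity)]
  field_simp

theorem laplaceExponent_le_mul (hX : LevyProcess P X) (hθ : θ ∈ laplaceDomain P (X 1)) {t : ℝ}
    (ht : 0 ≤ t) : laplaceExponent P (X t) θ ≤ t * laplaceExponent P (X 1) θ := by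
  let q : ℕ → ℝ := fun n => ⌈t * (n + 1 : ℕ)⌉₊ / (n + 1 : ℕ)
  have hq0 : ∀ n, 0 ≤ q n := fun n => by positivity
  have hqt : Tendsto q atTop (𝓝[≥] t) := by
    refine tendsto_nhdsWithin_iff.2 ⟨(tendsto_nat_ceil_mul_div_atTop ht).comp
      (tendsto_natCast_atTop_atTop.comp (tendsto_add_atTop_nat 1)), .of_forall fun n => ?_⟩
    exact (le_div_iff₀ (Nat.cast_pos.2 n.succ_pos : (0 : ℝ) < (n + 1 : ℕ))).2 (Nat.le_ceil _)
  have hmgf : ∀ n, ∫ ω, Real.exp (θ * X (q n) ω) ∂P =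
      Real.exp (q n * laplaceExponent P (X 1) θ) := fun n => by
    rw [← hX.laplaceExponent_natCast_div _ n.succ_ne_zero]
    exact (exp_laplaceExponent (hX.laplaceDomain_subset (hq0 n) hθ)).symm
  have hlim : ∀ᵐ ω ∂P, Tendsto (fun n => Real.exp (θ * X (q n) ω)) atTop
      (𝓝 (Real.exp (θ * X t ω))) := hX.rightCont.mono fun ω hω =>
    (Real.continuous_exp.tendsto _).comp (((hω t ht).tendsto.comp hqt).const_mul θ)
  have hfatou := integrable_and_integral_le_of_ae_tendsto
    (fun n => hX.laplaceDomain_subset (hq0 n) hθ) (fun n ω => (Real.exp_pos _).le) hlim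
    (c := Real.exp (t * laplaceExponent P (X 1) θ)) <| by
      simp_rw [hmgf]
      exact (Real.continuous_exp.tendsto _).comp
        ((tendsto_nhds_of_tendsto_nhdsWithin hqt).mul_const _)
  rw [← Real.exp_le_exp, exp_laplaceExponent hfatou.1]
  exact hfatou.2

/-- Fatou's lemma only gives `≤`; additivity over `⌈t⌉ = t + (⌈t⌉ - t)` gives the converse. -/
theorem laplaceExponent_eq_mul (hX : LevyProcess P X) (hθ : θ ∈ laplaceDomain P (X 1)) {t : ℝ}
    (ht : 0 ≤ t) : laplaceExponent P (X t) θ = t * laplaceExponent P (X 1) θ := by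
  have hrest : 0 ≤ ⌈t⌉₊ - t := sub_nonneg.2 (Nat.le_ceil t)
  have hadd := hX.laplaceExponent_add hθ ht hrest
  have hnat := hX.laplaceExponent_natCast_mul (θ := θ) (zero_le_one (α := ℝ)) ⌈t⌉₊
  rw [mul_one] at hnat
  rw [add_sub_cancel, hnat] at hadd
  refine (hX.laplaceExponent_le_mul hθ ht).antisymm ?_
  linarith [hX.laplaceExponent_le_mul hθ hrest]

end LaplaceExponent

theorem lintegral_exp_increment_div_mgf (hX : LevyProcess P X) {θ : ℝ}
    (hθ : θ ∈ laplaceDomain P (X 1)) {s t : ℝ} (hs : 0 ≤ s) (hst : s ≤ t) :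
    ∫⁻ ω, ENNReal.ofReal (Real.exp (θ * (X t ω - X s ω)) / mgf (X (t - s)) P θ) ∂P = 1 := by
  rw [← hX.mgf_increment hs hst]
  have hpos : 0 < mgf (X t - X s) P θ := by
    rw [hX.mgf_increment hs hst]
    exact mgf_pos (hX.laplaceDomain_subset (sub_nonneg.2 hst) hθ)
  have : IsProbabilityMeasure (P.tilted (θ * (X t - X s) ·)) :=
    isProbabilityMeasure_tilted (mgf_pos_iff.1 hpos)
  have huniv := measure_univ (μ := P.tilted (θ * (X t - X s) ·))
  rwa [tilted_mul_apply_mgf, Measure.restrict_univ] at huniv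

theorem tilted_apply_eq_of_past (hX : LevyProcess P X) {θ : ℝ} (hθ : θ ∈ laplaceDomain P (X 1))
    {s t : ℝ} (hs : 0 ≤ s) (hst : s ≤ t) {A : Set Ω} (hA : MeasurableSet[past X s] A) :
    P.tilted (θ * X t ·) A = P.tilted (θ * X s ·) A := by
  let Zpast : Ω → ℝ≥0∞ :=
    A.indicator fun ω => ENNReal.ofReal (Real.exp (θ * X s ω) / mgf (X s) P θ)
  let Zinc : Ω → ℝ≥0∞ := fun ω =>
    ENNReal.ofReal (Real.exp (θ * (X t ω - X s ω)) / mgf (X (t - s)) P θ)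
  have hXs : Measurable[past X s] (X s) := measurable_past (right_mem_Icc.2 hs)
  have hZpast : Measurable[past X s] Zpast :=
    ((hXs.const_mul θ).exp.div_const _).ennreal_ofReal.indicator hA
  have hZinc : Measurable[.comap (fun ω => X t ω - X s ω) inferInstance] Zinc :=
    (((comap_measurable _).const_mul θ).exp.div_const _).ennreal_ofReal
  have hfactor : (A.indicator fun ω => ENNReal.ofReal (Real.exp (θ * X t ω) / mgf (X t) P θ))
      = Zpast * Zinc := by
    ext ω
    by_cases hω : ω ∈ A
    · have hmgf : mgf (X t) P θ = mgf (X s) P θ * mgf (X (t - s)) P θ := by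
        rw [← hX.mgf_add θ hs (sub_nonneg.2 hst), add_sub_cancel]
      have hexp : Real.exp (θ * X t ω)
          = Real.exp (θ * X s ω) * Real.exp (θ * (X t ω - X s ω)) := by
        rw [← Real.exp_add]
        ring_nf
      simp only [Zpast, Zinc, Pi.mul_apply, indicator_of_mem hω]
      rw [hmgf, hexp, mul_div_mul_comm,
        ENNReal.ofReal_mul (div_nonneg (Real.exp_pos _).le mgf_nonneg)]
    · simp only [Zpast, Pi.mul_apply, indicator_of_notMem hω, zero_mul]
  have hAm : MeasurableSet A := hX.past_le s A hA
  calc P.tilted (θ * X t ·) A = ∫⁻ ω, (Zpast * Zinc) ω ∂P := by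
        rw [tilted_mul_apply_mgf, ← lintegral_indicator hAm, hfactor]
    _ = (∫⁻ ω, Zpast ω ∂P) * ∫⁻ ω, Zinc ω ∂P :=
        lintegral_mul_eq_lintegral_mul_lintegral_of_independent_measurableSpace (hX.past_le s)
          ((hX.meas t).sub (hX.meas s)).comap_le (hX.indep s t hs hst) hZpast hZinc
    _ = P.tilted (θ * X s ·) A := by
        rw [hX.lintegral_exp_increment_div_mgf hθ hs hst, mul_one, lintegral_indicator hAm,
          tilted_mul_apply_mgf]

theorem mgf_eq_one (hX : LevyProcess P X) {γ t : ℝ} (hγ : γ ∈ laplaceDomain P (X 1))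
    (hψ : laplaceExponent P (X 1) γ = 0) (ht : 0 ≤ t) : mgf (X t) P γ = 1 := by
  rw [← exp_laplaceExponent (hX.laplaceDomain_subset ht hγ), hX.laplaceExponent_eq_mul hγ ht, hψ,
    mul_zero, Real.exp_zero]

section Skeleton

/-- The event that, along the sampling times `s`, the path first exceeds `x` at index `k`. -/
def firstPassage {Ω : Type*} (X : ℝ → Ω → ℝ) (s : ℕ → ℝ) (x : ℝ) (k : ℕ) : Set Ω :=
  disjointed (fun j => {ω | x < X (s j) ω}) k

theorem mem_firstPassage {Ω : Type*} {X : ℝ → Ω → ℝ} {s : ℕ → ℝ} {x : ℝ} {k : ℕ} {ω : Ω} :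
    ω ∈ firstPassage X s x k ↔ x < X (s k) ω ∧ ∀ j < k, X (s j) ω ≤ x := by
  simp [firstPassage, disjointed_eq_inter_compl]

theorem measurableSet_past_firstPassage {Ω : Type*} {X : ℝ → Ω → ℝ} {s : ℕ → ℝ} (x : ℝ)
    (hmono : Monotone s) (hs : ∀ k, 0 ≤ s k) (k : ℕ) :
    MeasurableSet[past X (s k)] (firstPassage X s x k) := by
  have hlevel : ∀ j ≤ k, MeasurableSet[past X (s k)] {ω | x < X (s j) ω} := fun j hj =>
    measurable_past ⟨hs j, hmono hj⟩ measurableSet_Ioi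
  rw [firstPassage, disjointed_eq_inter_compl]
  exact (hlevel k le_rfl).inter <|
    .biInter (to_countable _) fun j hj => (hlevel j (le_of_lt hj)).compl

variable {s : ℕ → ℝ} {t γ x : ℝ}

theorem ofReal_exp_mul_measure_iUnion_le_tilted (hX : LevyProcess P X)
    (hγ : γ ∈ laplaceDomain P (X 1)) (hψ : laplaceExponent P (X 1) γ = 0) (hγ0 : 0 ≤ γ)
    (hmono : Monotone s) (hs : ∀ k, s k ∈ Icc 0 t) :
    ENNReal.ofReal (Real.exp (γ * x)) * P (⋃ k, {ω | x < X (s k) ω}) ≤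
      P.tilted (γ * X t ·) (⋃ k, {ω | x < X (s k) ω}) := by
  have hfirst : ∀ k, ENNReal.ofReal (Real.exp (γ * x)) * P (firstPassage X s x k) ≤
      P.tilted (γ * X t ·) (firstPassage X s x k) := fun k => by
    have hpast := measurableSet_past_firstPassage (X := X) x hmono (fun k => (hs k).1) k
    rw [hX.tilted_apply_eq_of_past hγ (hs k).1 (hs k).2 hpast]
    have hsandwich := ofReal_exp_mul_measure_le_tilted_apply (μ := P) (Z := (γ * X (s k) ·))
      (hX.past_le _ _ hpast) (a := γ * x) fun ω hω =>
        mul_le_mul_of_nonneg_left (mem_firstPassage.1 hω).1.le hγ0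
    rwa [← mgf, hX.mgf_eq_one hγ hψ (hs k).1, div_one] at hsandwich
  exact measure_iUnion_le_of_disjointed_le (μ := ENNReal.ofReal (Real.exp (γ * x)) • P)
    (fun k => hX.meas _ measurableSet_Ioi) hfirst

theorem tilted_firstPassage_inter_le (hX : LevyProcess P X) (hγ : γ ∈ laplaceDomain P (X 1))
    (hψ : laplaceExponent P (X 1) γ = 0) (hγ0 : 0 ≤ γ) (hmono : Monotone s)
    (hs : ∀ k, s k ∈ Icc 0 t) (a : ℝ) (k : ℕ) :
    P.tilted (γ * X t ·) (firstPassage X s x k ∩ {ω | X (s k) ω ≤ a}) ≤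
      ENNReal.ofReal (Real.exp (γ * a)) * P (firstPassage X s x k) := by
  have hpast : MeasurableSet[past X (s k)] (firstPassage X s x k ∩ {ω | X (s k) ω ≤ a}) :=
    (measurableSet_past_firstPassage x hmono (fun k => (hs k).1) k).inter
      (measurable_past (right_mem_Icc.2 (hs k).1) measurableSet_Iic)
  have hsandwich := tilted_apply_le_ofReal_exp_mul_measure (μ := P) (Z := (γ * X (s k) ·))
    (hX.past_le _ _ hpast) (a := γ * a) fun ω hω => mul_le_mul_of_nonneg_left hω.2 hγ0
  rw [← mgf, hX.mgf_eq_one hγ hψ (hs k).1, div_one] at hsandwich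
  rw [hX.tilted_apply_eq_of_past hγ (hs k).1 (hs k).2 hpast]
  exact hsandwich.trans (by gcongr; exact inter_subset_left)

theorem tilted_iUnion_le_ofReal_exp_mul_measure_add (hX : LevyProcess P X)
    (hγ : γ ∈ laplaceDomain P (X 1)) (hψ : laplaceExponent P (X 1) γ = 0) (hγ0 : 0 ≤ γ)
    (hmono : Monotone s) (hs : ∀ k, s k ∈ Icc 0 t) (hs0 : s 0 = 0) (hx : 0 ≤ x) (δ : ℝ) :
    P.tilted (γ * X t ·) (⋃ k, {ω | x < X (s k) ω}) ≤
      ENNReal.ofReal (Real.exp (γ * (x + δ))) * P (⋃ k, {ω | x < X (s k) ω}) +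
        P.tilted (γ * X t ·) (⋃ k, {ω | δ < X (s (k + 1)) ω - X (s k) ω}) := by
  set D := firstPassage X s x
  set O := ⋃ k, {ω | δ < X (s (k + 1)) ω - X (s k) ω}
  set Q := P.tilted (γ * X t ·)
  set c := ENNReal.ofReal (Real.exp (γ * (x + δ)))
  have hmeas : ∀ k, MeasurableSet {ω | x < X (s k) ω} := fun k => hX.meas _ measurableSet_Ioi
  have hcover : ∀ k, ∀ᵐ ω ∂Q, ω ∈ D k → ω ∈ D k ∩ {ω | X (s k) ω ≤ x + δ} ∪ D k ∩ O := by
    rintro (_ | k)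
    · filter_upwards [(tilted_absolutelyContinuous P _).ae_le hX.init] with ω hω hmem
      have hlt := (mem_firstPassage.1 hmem).1
      rw [hs0, hω] at hlt
      exact absurd hx hlt.not_ge
    · refine .of_forall fun ω hω => ?_
      have hprev : X (s k) ω ≤ x := (mem_firstPassage.1 hω).2 k k.lt_succ_self
      refine (le_or_gt (X (s (k + 1)) ω) (x + δ)).imp (⟨hω, ·⟩) fun hover => ⟨hω, ?_⟩
      exact mem_iUnion.2 ⟨k, by rw [mem_ofPred_eq]; linarith⟩
  have hfirst : ∀ k, Q (D k) ≤ (c • P + Q.restrict O) (D k) := fun k => calc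
    Q (D k) ≤ Q (D k ∩ {ω | X (s k) ω ≤ x + δ}) + Q (D k ∩ O) :=
      (measure_mono_ae (hcover k)).trans (measure_union_le _ _)
    _ ≤ c * P (D k) + Q.restrict O (D k) :=
      add_le_add (hX.tilted_firstPassage_inter_le hγ hψ hγ0 hmono hs _ k)
        (Measure.restrict_apply (.disjointed hmeas k)).ge
  refine (measure_iUnion_le_of_disjointed_le hmeas hfirst).trans (add_le_add le_rfl ?_)
  exact (measure_mono (subset_univ _)).trans_eq (Measure.restrict_apply_univ O)

end Skeleton

theorem ofReal_exp_mul_measure_passageEvent (hX : LevyProcess P X)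
    (hspec : ∀ᵐ ω ∂P, ∀ s, 0 < s → X s ω ≤ Function.leftLim (fun u => X u ω) s)
    {γ : ℝ} (hγ : γ ∈ laplaceDomain P (X 1)) (hψ : laplaceExponent P (X 1) γ = 0) (hγ0 : 0 ≤ γ)
    {x t : ℝ} (hx : 0 ≤ x) (ht : 0 ≤ t) :
    ENNReal.ofReal (Real.exp (γ * x)) * P (passageEvent X x t) =
      P.tilted (γ * X t ·) (passageEvent X x t) := by
  set Q := P.tilted (γ * X t ·)
  have hQP : Q ≪ P := tilted_absolutelyContinuous P _
  have hP := hX.tendsto_measure_iUnion_grid .rfl ht x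
  have hQ := hX.tendsto_measure_iUnion_grid hQP ht x
  refine le_antisymm (le_of_tendsto_of_tendsto' (ENNReal.Tendsto.const_mul hP
    (.inr ENNReal.ofReal_ne_top)) hQ fun N => hX.ofReal_exp_mul_measure_iUnion_le_tilted hγ hψ hγ0
      (monotone_grid t N) (grid_mem_Icc ht N)) ?_
  have hovershoot : ∀ δ > 0,
      Q (passageEvent X x t) ≤ ENNReal.ofReal (Real.exp (γ * (x + δ))) * P (passageEvent X x t) :=
    fun δ hδ => by
    refine le_of_tendsto_of_tendsto' hQ ?_ fun N =>
      hX.tilted_iUnion_le_ofReal_exp_mul_measure_add hγ hψ hγ0 (monotone_grid t N)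
        (grid_mem_Icc ht N) (grid_zero ht N) hx δ
    simpa only [add_zero] using
      (ENNReal.Tendsto.const_mul hP (.inr ENNReal.ofReal_ne_top)).add
        (hX.tendsto_measure_iUnion_grid_increment hspec hQP ht hδ)
  have hcont : Continuous fun δ : ℝ => ENNReal.ofReal (Real.exp (γ * (x + δ))) :=
    ENNReal.continuous_ofReal.comp (by fun_prop)
  have hlim : Tendsto (fun δ : ℝ => ENNReal.ofReal (Real.exp (γ * (x + δ))) *
      P (passageEvent X x t)) (𝓝[>] 0)
      (𝓝 (ENNReal.ofReal (Real.exp (γ * x)) * P (passageEvent X x t))) := by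
    refine ENNReal.Tendsto.mul_const ?_ (.inr (measure_ne_top P _))
    simpa only [add_zero] using (hcont.tendsto 0).mono_left nhdsWithin_le_nhds
  exact ge_of_tendsto hlim (eventually_mem_nhdsWithin.mono hovershoot)

theorem exp_mul_measureReal_passageEvent_mem_Icc (hX : LevyProcess P X)
    (hspec : ∀ᵐ ω ∂P, ∀ s, 0 < s → X s ω ≤ Function.leftLim (fun u => X u ω) s)
    {γ : ℝ} (hγ : γ ∈ laplaceDomain P (X 1)) (hψ : laplaceExponent P (X 1) γ = 0)
    {θ : ℝ} (hθ : θ ∈ Icc 0 γ) {x t : ℝ} (hx : 0 ≤ x) (ht : 0 ≤ t) :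
    Real.exp (γ * x) * P.real (passageEvent X x t) ∈
      Icc (1 - Real.exp ((γ - θ) * x + t * laplaceExponent P (X 1) θ)) 1 := by
  set Q := P.tilted (γ * X t ·)
  have hγt : γ ∈ laplaceDomain P (X t) := hX.laplaceDomain_subset ht hγ
  have hθ1 : θ ∈ laplaceDomain P (X 1) := Icc_zero_subset_laplaceDomain hγ hθ
  have : IsProbabilityMeasure Q := isProbabilityMeasure_tilted hγt
  have hQ : Real.exp (γ * x) * P.real (passageEvent X x t) = Q.real (passageEvent X x t) := by
    rw [Measure.real, Measure.real, ← hX.ofReal_exp_mul_measure_passageEvent hspec hγ hψ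
      (hθ.1.trans hθ.2) hx ht, ENNReal.toReal_mul, ENNReal.toReal_ofReal (Real.exp_pos _).le]
  have hchernoff : Q.real {ω | X t ω ≤ x} ≤
      Real.exp ((γ - θ) * x + t * laplaceExponent P (X 1) θ) := by
    have := measureReal_tilted_le_exp (x := x) hθ.2 (hX.laplaceDomain_subset ht hθ1) hγt
    rwa [hX.laplaceExponent_eq_mul hγ ht, hX.laplaceExponent_eq_mul hθ1 ht, hψ, mul_zero,
      sub_zero] at this
  have hend : 1 - Q.real {ω | X t ω ≤ x} = Q.real {ω | x < X t ω} := by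
    have hmeas : MeasurableSet {ω | X t ω ≤ x} := hX.meas t measurableSet_Iic
    rw [← probReal_compl_eq_one_sub hmeas]
    simp only [compl_ofPred, not_le]
  have hsub : {ω | x < X t ω} ⊆ passageEvent X x t := fun ω hω => ⟨t, ht, le_rfl, hω⟩
  rw [hQ]
  exact ⟨by linarith [measureReal_mono hsub (μ := Q)], measureReal_le_one⟩

theorem tendsto_exp_mul_measureReal_passageEvent (hX : LevyProcess P X)
    (hspec : ∀ᵐ ω ∂P, ∀ s, 0 < s → X s ω ≤ Function.leftLim (fun u => X u ω) s)
    {γ : ℝ} (hγ : γ ∈ laplaceDomain P (X 1)) (hψ : laplaceExponent P (X 1) γ = 0)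
    {θ : ℝ} (hθ : θ ∈ Icc 0 γ) {v : ℝ} (hθv : laplaceExponent P (X 1) θ < -(v * (γ - θ)))
    {ι : Type*} {l : Filter ι} {t x : ι → ℝ} (ht : Tendsto t l atTop)
    (hx : ∀ᶠ i in l, x i ∈ Icc 0 (v * t i)) :
    Tendsto (fun i => Real.exp (γ * x i) * P.real (passageEvent X (x i) (t i))) l (𝓝 1) := by
  have hrate : 0 < -(v * (γ - θ)) - laplaceExponent P (X 1) θ := sub_pos.2 hθv
  have hlower : Tendsto (fun i =>
      1 - Real.exp (-((-(v * (γ - θ)) - laplaceExponent P (X 1) θ) * t i))) l (𝓝 1) := by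
    simpa using (Real.tendsto_exp_neg_atTop_nhds_zero.comp (ht.const_mul_atTop hrate)).const_sub 1
  refine tendsto_of_tendsto_of_tendsto_of_le_of_le' hlower tendsto_const_nhds ?_ ?_
  all_goals
    filter_upwards [hx, ht.eventually_ge_atTop 0] with i hxi hti
    have hmem := hX.exp_mul_measureReal_passageEvent_mem_Icc hspec hγ hψ hθ hxi.1 hti
  · refine le_trans ?_ hmem.1
    gcongr
    linarith [mul_le_mul_of_nonneg_left hxi.2 (sub_nonneg.2 hθ.2)]
  · exact hmem.2

end LevyProcess

theorem cramer_finite_time_spectrally_negative_small_v_general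
    {Ω : Type*} [MeasurableSpace Ω] {P : Measure Ω} [IsProbabilityMeasure P]
    {X : ℝ → Ω → ℝ} (hX : LevyProcess P X)
    (hspec : ∀ᵐ ω ∂P, ∀ t, 0 < t → X t ω ≤ Function.leftLim (fun s => X s ω) t)
    {γ : ℝ} (hγ : γ ∈ laplaceDomain P (X 1)) (hψ : laplaceExponent P (X 1) γ = 0) (hγpos : 0 < γ)
    {d : ℝ} (hd : HasDerivWithinAt (laplaceExponent P (X 1)) d (laplaceDomain P (X 1)) γ)
    {v : ℝ} (hv : v < d) {ι : Type*} {l : Filter ι} {t x : ι → ℝ} (ht : Tendsto t l atTop)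
    (hx : ∀ᶠ i in l, x i ∈ Icc 0 (v * t i)) :
    Tendsto (fun i => Real.exp (γ * x i) *
      (P {ω | ∃ s : ℝ, 0 ≤ s ∧ s ≤ t i ∧ x i < X s ω}).toReal) l (𝓝 1) := by
  obtain ⟨θ, hθ, hlt⟩ := exists_mem_Ioo_lt_of_hasDerivWithinAt hγpos
    (Ioo_subset_Icc_self.trans (Icc_zero_subset_laplaceDomain hγ)) hd hv
  rw [hψ, zero_sub] at hlt
  exact hX.tendsto_exp_mul_measureReal_passageEvent hspec hγ hψ (Ioo_subset_Icc_self hθ) hlt ht hx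

/-- Cramér asymptotics, case `0 < v < ψ'(γ)`, for a spectrally negative Lévy process:
`e^{γ x_n} P(τ(x_n) ≤ t_n) → C_γ = 1` whenever `t_n → ∞` and `x_n = v t_n + o(t_n^{1/2})`.
Here `{τ(x) ≤ t} = {∃ s ∈ [0,t], X_s > x}`. -/
theorem cramer_finite_time_spectrally_negative_small_v
    {Ω : Type*} [MeasurableSpace Ω] (P : Measure Ω) [IsProbabilityMeasure P]
    (X : ℝ → Ω → ℝ) (hX : LevyProcess P X)
    -- spectrally negative: no positive jumps
    (hspec : ∀ᵐ ω ∂P, ∀ t : ℝ, 0 < t → X t ω ≤ Function.leftLim (fun s => X s ω) t)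
    -- non-monotone paths
    (hnonmono : ∀ᵐ ω ∂P, ¬ MonotoneOn (fun t => X t ω) (Set.Ici 0) ∧
      ¬ AntitoneOn (fun t => X t ω) (Set.Ici 0))
    -- the law of `X t` is atomless for every `t > 0`
    (hatomless : ∀ t : ℝ, 0 < t → ∀ c : ℝ, P {ω | X t ω = c} = 0)
    -- exponential moments: `E[e^{θ₀ X_1}] < ∞` for some `θ₀ > 0`
    (θ₀ : ℝ) (hθ₀pos : 0 < θ₀) (hθ₀ : θ₀ ∈ laplaceDomain P (X 1))
    -- the Cramér exponent `γ = sup{θ ∈ Θ : ψ(θ) = 0} > 0`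
    (γ : ℝ)
    (hγ : γ = sSup {θ ∈ laplaceDomain P (X 1) | laplaceExponent P (X 1) θ = 0})
    (hγpos : 0 < γ)
    -- `0 < ψ'(γ) < ∞`
    (dγ : ℝ)
    (hdγ : HasDerivWithinAt (laplaceExponent P (X 1)) dγ (laplaceDomain P (X 1)) γ)
    (hdγpos : 0 < dγ)
    -- `0 < v < ψ'(γ)`
    (v : ℝ) (hvpos : 0 < v) (hv : v < dγ)
    -- there exists `Γ(v) ∈ Θ°` with `ψ'(Γ(v)) = v`
    (Γv : ℝ) (hΓv : Γv ∈ interior (laplaceDomain P (X 1)))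
    (hΓd : HasDerivAt (laplaceExponent P (X 1)) v Γv)
    -- the sequences `t_n → ∞`, `x_n = v t_n + o(t_n^{1/2})`
    (t x : ℕ → ℝ) (ht : Tendsto t atTop atTop)
    (hx : Tendsto (fun n => (x n - v * t n) / Real.sqrt (t n)) atTop (nhds 0)) :
    Tendsto (fun n => Real.exp (γ * x n) *
        (P {ω | ∃ s : ℝ, 0 ≤ s ∧ s ≤ t n ∧ x n < X s ω}).toReal)
      atTop (nhds 1) := by
  obtain ⟨hγmem, hψγ⟩ := laplaceExponent_sSup_eq_zero hγ hγpos hdγ.continuousWithinAt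
  obtain ⟨w, hvw, hwd⟩ := exists_between hv
  exact cramer_finite_time_spectrally_negative_small_v_general hX hspec hγmem hψγ hγpos hdγ hwd ht
    (eventually_mem_Icc_mul_of_tendsto_sub_div_sqrt hvpos hvw ht hx)
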